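/- A positive integer k is a sum of three integer squares if and only if the square-free part of k is not congruent to 7 modulo 8. -/

import Mathlib

/-!
If `k = s * m ^ 2` with `s ≡ 7 mod 8`, then dividing out powers of `4` reduces to odd `m`, where
`k ≡ 7 mod 8` while squares are `0`, `1` or `4` modulo `8`.

Conversely it suffices to represent `n` with `4 ∤ n` and `n ≢ 7 mod 8`. Suppose that
`t ^ 2 + d = (d * n - 1) * g` with `d > 0` and `d * n > 1`. Then `n` is a diagonal entry of the
positive definite matrix with rows `(g, t, 1)`, `(t, d * n - 1, 0)`, `(1, 0, n)`, whose
determinant is `1`. Hermite's inequality gives such a matrix a basis vector of value `1`; splitting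
it off repeatedly writes the matrix as `Uᵀ * U`, so that `n` is the squared length of a column of
`U`. To find `d` and `t`, Dirichlet's theorem provides `d` such that `d * n - 1` is a prime or twice
a prime `p`, in residue classes for which reciprocity makes `-d` a square modulo `p`.

Hermite's inequality is proved by induction on the dimension: among all basis vectors take `v` with
the least value `a`, and a basis vector `w` of small value for the form induced on the orthogonal
complement of `v`. A lift of `w` whose component along `v` is at most `v / 2` has value
at least `a`, which bounds `a` in terms of the value of `w`.
-/

open Matrix

section Bordered

variable {R : Type*} [CommRing R] {n : ℕ}

theorem det_eq_corner_mul_det_submatrix (M : Matrix (Fin (n + 1)) (Fin (n + 1)) R)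
    (hM : ∀ i : Fin n, M i.succ 0 = 0) :
    M.det = M 0 0 * (M.submatrix Fin.succ Fin.succ).det := by
  simp [det_succ_column_zero, Fin.sum_univ_succ, hM]

/-- The block matrix with first row `(1, t)`, first column `(1, 0)` and remaining block `P`. As a
change of basis it keeps the first basis vector, applies `P` to the others, and translates the
latter by the multiples `t` of the first. -/
def bordered (t : Fin n → R) (P : Matrix (Fin n) (Fin n) R) :
    Matrix (Fin (n + 1)) (Fin (n + 1)) R :=
  of (vecCons (vecCons 1 t) fun i => vecCons 0 (P i))

theorem det_bordered (t : Fin n → R) (P : Matrix (Fin n) (Fin n) R) :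
    (bordered t P).det = P.det :=
  (det_eq_corner_mul_det_submatrix _ fun _ => rfl).trans (one_mul _)

theorem bordered_col_succ (t : Fin n → R) (P : Matrix (Fin n) (Fin n) R) (j : Fin n) :
    (bordered t P).col j.succ = vecCons (t j) (P.col j) := by
  ext i
  cases i using Fin.cases <;> simp [bordered]

end Bordered

section IsBasisVector

variable {ι R : Type*} [Fintype ι] [DecidableEq ι] [CommRing R]

/-- A vector of `R ^ ι` is a basis vector if it belongs to some basis of `R ^ ι`, that is, if it
is a column of an invertible matrix. -/
def IsBasisVector (v : ι → R) : Prop :=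
  ∃ P : Matrix ι ι R, IsUnit P ∧ ∃ j, P.col j = v

theorem isBasisVector_single (i : ι) : IsBasisVector (Pi.single i 1 : ι → R) :=
  ⟨1, isUnit_one, i, by ext j; simp [one_apply, Pi.single_apply]⟩

theorem IsBasisVector.exists_col_eq {v : ι → R} (hv : IsBasisVector v) (i : ι) :
    ∃ P : Matrix ι ι R, IsUnit P ∧ P.col i = v := by
  obtain ⟨P, hP, j, rfl⟩ := hv
  refine ⟨P.submatrix (Equiv.refl ι) (Equiv.swap i j), (isUnit_submatrix_equiv _ _).mpr hP, ?_⟩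
  ext k
  simp

theorem IsBasisVector.mulVec {P : Matrix ι ι R} (hP : IsUnit P) {v : ι → R}
    (hv : IsBasisVector v) : IsBasisVector (P *ᵥ v) := by
  obtain ⟨Q, hQ, j, rfl⟩ := hv
  exact ⟨P * Q, hP.mul hQ, j, rfl⟩

theorem IsBasisVector.vecCons {n : ℕ} {w : Fin n → R} (hw : IsBasisVector w) (t : R) :
    IsBasisVector (vecCons t w) := by
  obtain ⟨P, hP, j, rfl⟩ := hw
  refine ⟨bordered (fun _ => t) P, ?_, j.succ, bordered_col_succ _ P j⟩
  rwa [isUnit_iff_isUnit_det, det_bordered, ← isUnit_iff_isUnit_det]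

end IsBasisVector

section Condensation

variable {R : Type*} [CommRing R] {n : ℕ}

/-- The denominator-free Schur complement of the top left entry of `M`, as in Chio's condensation.
For symmetric `M` it is `M 0 0` times the matrix of the form induced on the orthogonal complement of
the first basis vector. -/
def condensation (M : Matrix (Fin (n + 1)) (Fin (n + 1)) R) : Matrix (Fin n) (Fin n) R :=
  M 0 0 • M.submatrix Fin.succ Fin.succ - vecMulVec (fun i => M i.succ 0) fun j => M 0 j.succ

theorem mul_det_condensation (M : Matrix (Fin (n + 1)) (Fin (n + 1)) R) :
    M 0 0 * (condensation M).det = M 0 0 ^ n * M.det := by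
  let scaled : Matrix (Fin (n + 1)) (Fin (n + 1)) R :=
    of fun i j => (vecCons 1 fun _ => M 0 0 : Fin (n + 1) → R) i * M i j
  let cleared : Matrix (Fin (n + 1)) (Fin (n + 1)) R :=
    of (vecCons (M 0) fun i => vecCons 0 (condensation M i))
  have det_scaled : scaled.det = M 0 0 ^ n * M.det := by
    simp [scaled, det_mul_column, Fin.prod_univ_succ]
  have det_cleared : cleared.det = M 0 0 * (condensation M).det :=
    det_eq_corner_mul_det_submatrix _ fun _ => rfl
  rw [← det_scaled, ← det_cleared]
  refine det_eq_of_forall_row_eq_smul_add_const (vecCons 0 fun i => -M i.succ 0) 0 rfl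
    fun i j => ?_
  cases i using Fin.cases with
  | zero => simp [cleared, scaled]
  | succ i =>
    cases j using Fin.cases with
    | zero => simp [cleared, scaled, mul_comm]
    | succ j => simp [cleared, scaled, condensation, vecMulVec_apply, sub_eq_add_neg]

theorem isSymm_condensation {M : Matrix (Fin (n + 1)) (Fin (n + 1)) R} (hM : M.IsSymm) :
    (condensation M).IsSymm := by
  ext i j
  simp [condensation, vecMulVec_apply, hM.apply, mul_comm]

theorem corner_mul_dotProduct_mulVec_vecCons {M : Matrix (Fin (n + 1)) (Fin (n + 1)) R}
    (hM : M.IsSymm) (t : R) (w : Fin n → R) :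
    M 0 0 * (vecCons t w ⬝ᵥ M *ᵥ vecCons t w) =
      (M 0 0 * t + (fun i => M 0 i.succ) ⬝ᵥ w) ^ 2 + w ⬝ᵥ condensation M *ᵥ w := by
  set b : Fin n → R := fun i => M 0 i.succ with hb
  have first_col : (fun i => M (Fin.succ i) 0) = b := funext fun i => hM.apply 0 i.succ
  have mulVec_cons : M *ᵥ vecCons t w =
      vecCons (M 0 0 * t + b ⬝ᵥ w) (t • b + M.submatrix Fin.succ Fin.succ *ᵥ w) := by
    ext i
    cases i using Fin.cases <;>
      simp [← first_col, mulVec, dotProduct, Fin.sum_univ_succ, hM.apply, mul_comm]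
  simp only [mulVec_cons, condensation, first_col, ← hb, sub_mulVec, smul_mulVec,
    vecMulVec_mulVec, cons_dotProduct_cons, dotProduct_add, dotProduct_sub, dotProduct_smul,
    dotProduct_comm w b, smul_eq_mul, op_smul_eq_smul]
  ring

end Condensation

section TrivialStar

variable {ι R : Type*} [CommRing R] [PartialOrder R] [StarRing R] [TrivialStar R]
  {M : Matrix ι ι R}

theorem isSymm_of_posDef (hM : M.PosDef) : M.IsSymm :=
  (conjTranspose_eq_transpose_of_trivial M).symm.trans hM.isHermitian

variable [Fintype ι]

theorem dotProduct_mulVec_pos_of_posDef (hM : M.PosDef) {v : ι → R} (hv : v ≠ 0) :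
    0 < v ⬝ᵥ M *ᵥ v := by
  simpa only [star_trivial] using hM.dotProduct_mulVec_pos hv

theorem posDef_of_dotProduct_mulVec_pos (hM : M.IsSymm)
    (hpos : ∀ v : ι → R, v ≠ 0 → 0 < v ⬝ᵥ M *ᵥ v) : M.PosDef :=
  .of_dotProduct_mulVec_pos ((conjTranspose_eq_transpose_of_trivial M).trans hM) fun v hv => by
    simpa only [star_trivial] using hpos v hv

theorem posDef_transpose_mul_mul {κ : Type*} [Fintype κ] (hM : M.PosDef) {P : Matrix ι κ R}
    (hP : Function.Injective P.mulVec) : (Pᵀ * M * P).PosDef := by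
  simpa only [conjTranspose_eq_transpose_of_trivial] using hM.conjTranspose_mul_mul_same hP

end TrivialStar

section PosDef

variable {R : Type*} [CommRing R] [LinearOrder R] [IsStrictOrderedRing R] [StarRing R]
  [TrivialStar R] {n : ℕ} {M : Matrix (Fin (n + 1)) (Fin (n + 1)) R}

theorem posDef_condensation (hM : M.PosDef) : (condensation M).PosDef := by
  have hsymm : M.IsSymm := isSymm_of_posDef hM
  refine posDef_of_dotProduct_mulVec_pos (isSymm_condensation hsymm) fun w hw => ?_
  have corner_pos : 0 < M 0 0 := hM.diag_pos
  -- The vector orthogonal to the first basis vector above `w`, cleared of its denominator.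
  let v : Fin (n + 1) → R := vecCons (-((fun i => M 0 i.succ) ⬝ᵥ w)) (M 0 0 • w)
  have hv : v ≠ 0 := fun h => hw <| by
    have htail : M 0 0 • w = 0 := congrArg vecTail h
    exact (smul_eq_zero.mp htail).resolve_left corner_pos.ne'
  have hpos := mul_pos corner_pos (dotProduct_mulVec_pos_of_posDef hM hv)
  have identity :=
    corner_mul_dotProduct_mulVec_vecCons hsymm (-((fun i => M 0 i.succ) ⬝ᵥ w)) (M 0 0 • w)
  simp only [dotProduct_smul, mulVec_smul, smul_dotProduct, smul_eq_mul] at identity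
  have : 0 < M 0 0 ^ 2 * (w ⬝ᵥ condensation M *ᵥ w) := by
    linarith
  exact pos_of_mul_pos_right this (sq_nonneg _)

theorem posDef_of_condensation (hM : M.IsSymm) (hcorner : 0 < M 0 0)
    (hcond : (condensation M).PosDef) : M.PosDef := by
  refine posDef_of_dotProduct_mulVec_pos hM fun v hv => ?_
  rw [← cons_head_tail v]
  refine pos_of_mul_pos_right ?_ hcorner.le
  rw [corner_mul_dotProduct_mulVec_vecCons hM]
  by_cases htail : vecTail v = 0
  · have hhead : vecHead v ≠ 0 := fun h => hv <| by
      rw [← cons_head_tail v, h, htail, cons_zero_zero]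
    simpa [htail] using sq_pos_of_ne_zero (mul_ne_zero hcorner.ne' hhead)
  · exact add_pos_of_nonneg_of_pos (sq_nonneg _) (dotProduct_mulVec_pos_of_posDef hcond htail)

theorem posDef_of_leading_minors_pos {n : ℕ} {M : Matrix (Fin n) (Fin n) R} (hM : M.IsSymm)
    (hminor : ∀ k (hk : k ≤ n), 0 < (M.submatrix (Fin.castLE hk) (Fin.castLE hk)).det) :
    M.PosDef := by
  induction n with
  | zero => exact posDef_of_dotProduct_mulVec_pos hM fun v hv => (hv (Subsingleton.elim v 0)).elim
  | succ n ih =>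
    have hcorner : 0 < M 0 0 := by
      simpa using hminor 1 (Nat.succ_pos n)
    refine posDef_of_condensation hM hcorner (ih (isSymm_condensation hM) fun k hk => ?_)
    refine pos_of_mul_pos_right ?_ hcorner.le
    have hk' : k + 1 ≤ n + 1 := Nat.succ_le_succ hk
    calc 0 < M 0 0 ^ k * (M.submatrix (Fin.castLE hk') (Fin.castLE hk')).det :=
          mul_pos (pow_pos hcorner k) (hminor (k + 1) hk')
      _ = M 0 0 * ((condensation M).submatrix (Fin.castLE hk) (Fin.castLE hk)).det :=
          (mul_det_condensation (M.submatrix (Fin.castLE hk') (Fin.castLE hk'))).symm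

end PosDef

section Congruence

variable {ι κ R : Type*} [Fintype ι] [CommRing R]

theorem transpose_mul_mul_apply (M : Matrix ι ι R) (P : Matrix ι κ R) (i j : κ) :
    (Pᵀ * M * P) i j = P.col i ⬝ᵥ M *ᵥ P.col j := by
  rw [Matrix.mul_assoc]
  rfl

theorem dotProduct_transpose_mul_mul_mulVec [Fintype κ] (M : Matrix ι ι R) (P : Matrix ι κ R)
    (v : κ → R) :
    v ⬝ᵥ (Pᵀ * M * P) *ᵥ v = (P *ᵥ v) ⬝ᵥ M *ᵥ (P *ᵥ v) := by
  simp only [← mulVec_mulVec, dotProduct_mulVec, vecMul_transpose]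

theorem det_transpose_mul_mul [DecidableEq ι] (M : Matrix ι ι ℤ)
    {P : Matrix ι ι ℤ} (hP : IsUnit P) : (Pᵀ * M * P).det = M.det := by
  have hdet : P.det * P.det = 1 := by
    simpa only [sq] using Int.isUnit_sq ((isUnit_iff_isUnit_det P).mp hP)
  rw [det_mul, det_mul, det_transpose, mul_right_comm, hdet, one_mul]

end Congruence

section Hermite

variable {n : ℕ}

theorem exists_two_mul_abs_mul_add_le {a : ℤ} (ha : 0 < a) (b : ℤ) :
    ∃ t, 2 * |a * t + b| ≤ a := by
  have ha' : (0 : ℚ) < a := mod_cast ha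
  set x : ℚ := b / a with hx
  have hround : |(a : ℚ) * (-round x : ℤ) + b| ≤ a / 2 := by
    calc |(a : ℚ) * (-round x : ℤ) + b| = |a * (x - round x)| := by
          congr 1
          rw [hx, mul_sub, mul_div_cancel₀ _ ha'.ne', Int.cast_neg]
          ring
      _ = a * |x - round x| := by rw [abs_mul, abs_of_pos ha']
      _ ≤ a * (1 / 2) := by gcongr; exact abs_sub_round x
      _ = a / 2 := by ring
  exact ⟨-round x, mod_cast (le_div_iff₀' two_pos).mp hround⟩

theorem three_mul_corner_sq_le {M : Matrix (Fin (n + 1)) (Fin (n + 1)) ℤ} (hM : M.PosDef)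
    {w : Fin n → ℤ} (hmin : ∀ t, M 0 0 ≤ vecCons t w ⬝ᵥ M *ᵥ vecCons t w) :
    3 * M 0 0 ^ 2 ≤ 4 * (w ⬝ᵥ condensation M *ᵥ w) := by
  have hcorner : 0 < M 0 0 := hM.diag_pos
  obtain ⟨t, ht⟩ := exists_two_mul_abs_mul_add_le hcorner ((fun i => M 0 i.succ) ⬝ᵥ w)
  have hsq : 4 * (M 0 0 * t + (fun i => M 0 i.succ) ⬝ᵥ w) ^ 2 ≤ M 0 0 ^ 2 := by
    have := pow_le_pow_left₀ (by positivity) ht 2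
    rwa [mul_pow, sq_abs] at this
  have hmul := mul_le_mul_of_nonneg_left (hmin t) hcorner.le
  rw [corner_mul_dotProduct_mulVec_vecCons (isSymm_of_posDef hM)] at hmul
  linarith

theorem exists_isBasisVector_forall_le {ι : Type*} [Fintype ι] [DecidableEq ι] [Nonempty ι]
    {M : Matrix ι ι ℤ} (hM : M.PosSemidef) :
    ∃ v, IsBasisVector v ∧ ∀ u, IsBasisVector u → v ⬝ᵥ M *ᵥ v ≤ u ⬝ᵥ M *ᵥ u := by
  obtain ⟨v, hv, hmin⟩ := exists_minimalFor_of_wellFoundedLT IsBasisVector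
    (fun v => (v ⬝ᵥ M *ᵥ v).toNat) ⟨_, isBasisVector_single (Classical.arbitrary ι)⟩
  refine ⟨v, hv, fun u hu => le_of_not_gt fun hlt => ?_⟩
  have hnonneg : 0 ≤ u ⬝ᵥ M *ᵥ u := by
    simpa only [star_trivial] using hM.dotProduct_mulVec_nonneg u
  exact (Int.toNat_lt_toNat (hnonneg.trans_lt hlt)).mpr hlt |>.not_ge
    (hmin hu (Int.toNat_le_toNat hlt.le))

theorem hermite_inequality {M : Matrix (Fin (n + 1)) (Fin (n + 1)) ℤ} (hM : M.PosDef) :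
    ∃ v, IsBasisVector v ∧
      3 ^ (n + 1).choose 2 * (v ⬝ᵥ M *ᵥ v) ^ (n + 1) ≤ 4 ^ (n + 1).choose 2 * M.det := by
  induction n with
  | zero => exact ⟨_, isBasisVector_single 0, by simp⟩
  | succ n ih =>
    obtain ⟨v, hv, hmin⟩ := exists_isBasisVector_forall_le hM.posSemidef
    obtain ⟨P, hP, rfl⟩ := hv.exists_col_eq 0
    refine ⟨P.col 0, hv, ?_⟩
    set N := Pᵀ * M * P with hN
    have hNpos : N.PosDef := posDef_transpose_mul_mul hM (mulVec_injective_of_isUnit hP)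
    obtain ⟨w, hw, hbound⟩ := ih (posDef_condensation hNpos)
    have hcorner : 0 < N 0 0 := hNpos.diag_pos
    have hle : 3 * N 0 0 ^ 2 ≤ 4 * (w ⬝ᵥ condensation N *ᵥ w) := by
      refine three_mul_corner_sq_le hNpos fun t => ?_
      rw [hN, transpose_mul_mul_apply, dotProduct_transpose_mul_mul_mulVec]
      exact hmin _ ((hw.vecCons t).mulVec hP)
    have hdet : N 0 0 * (condensation N).det = N 0 0 ^ (n + 1) * M.det := by
      rw [mul_det_condensation, hN, det_transpose_mul_mul M hP]
    rw [← transpose_mul_mul_apply, ← hN, Nat.choose_succ_succ' (n + 1) 1, Nat.choose_one_right]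
    set C := (n + 1).choose 2
    refine le_of_mul_le_mul_left ?_ (pow_pos hcorner (n + 1))
    calc N 0 0 ^ (n + 1) * (3 ^ (n + 1 + C) * N 0 0 ^ (n + 2))
        = 3 ^ C * N 0 0 * (3 * N 0 0 ^ 2) ^ (n + 1) := by ring
      _ ≤ 3 ^ C * N 0 0 * (4 * (w ⬝ᵥ condensation N *ᵥ w)) ^ (n + 1) := by gcongr
      _ = 4 ^ (n + 1) * N 0 0 * (3 ^ C * (w ⬝ᵥ condensation N *ᵥ w) ^ (n + 1)) := by ring
      _ ≤ 4 ^ (n + 1) * N 0 0 * (4 ^ C * (condensation N).det) := by gcongr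
      _ = N 0 0 ^ (n + 1) * (4 ^ (n + 1 + C) * M.det) := by
        linear_combination 4 ^ (n + 1) * 4 ^ C * hdet

end Hermite

section Unimodular

theorem eq_one_of_three_pow_mul_pow_le_four_pow {n : ℕ} (hn : n ≤ 4) {a : ℤ} (ha : 0 < a)
    (h : 3 ^ (n + 1).choose 2 * a ^ (n + 1) ≤ 4 ^ (n + 1).choose 2) : a = 1 := by
  refine le_antisymm (not_lt.mp fun ha2 => h.not_gt ?_) ha
  calc (4 : ℤ) ^ (n + 1).choose 2 < 3 ^ (n + 1).choose 2 * 2 ^ (n + 1) := by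
        interval_cases n <;> decide
    _ ≤ 3 ^ (n + 1).choose 2 * a ^ (n + 1) := by gcongr; exact ha2

theorem eq_transpose_mul_self_bordered {R : Type*} [CommRing R] {n : ℕ}
    {N : Matrix (Fin (n + 1)) (Fin (n + 1)) R} (hN : N.IsSymm)
    (hcorner : N 0 0 = 1) {U : Matrix (Fin n) (Fin n) R} (hU : condensation N = Uᵀ * U) :
    N = (bordered (fun j => N 0 j.succ) U)ᵀ * bordered (fun j => N 0 j.succ) U := by
  ext i j
  cases i using Fin.cases with
  | zero =>
    cases j using Fin.cases <;> simp [Matrix.mul_apply, Fin.sum_univ_succ, bordered, hcorner]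
  | succ i =>
    cases j using Fin.cases with
    | zero => simp [Matrix.mul_apply, Fin.sum_univ_succ, bordered, hN.apply 0]
    | succ j =>
      have hentry : N i.succ j.succ - N 0 i.succ * N 0 j.succ = ∑ k, U k i * U k j := by
        simpa [condensation, vecMulVec_apply, hcorner, hN.apply 0, Matrix.mul_apply] using
          congrFun₂ hU i j
      simp [Matrix.mul_apply, Fin.sum_univ_succ, bordered, ← hentry]

theorem exists_eq_transpose_mul_self {n : ℕ} (hn : n ≤ 5) {M : Matrix (Fin n) (Fin n) ℤ}
    (hM : M.PosDef) (hdet : M.det = 1) : ∃ U : Matrix (Fin n) (Fin n) ℤ, M = Uᵀ * U := by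
  induction n with
  | zero => exact ⟨1, Subsingleton.elim _ _⟩
  | succ n ih =>
    obtain ⟨v, hv, hbound⟩ := hermite_inequality hM
    obtain ⟨P, hP, rfl⟩ := hv.exists_col_eq 0
    have hN : (Pᵀ * M * P).PosDef := posDef_transpose_mul_mul hM (mulVec_injective_of_isUnit hP)
    rw [← transpose_mul_mul_apply, hdet, mul_one] at hbound
    have hcorner : (Pᵀ * M * P) 0 0 = 1 :=
      eq_one_of_three_pow_mul_pow_le_four_pow (by omega) hN.diag_pos hbound
    have hcond : (condensation (Pᵀ * M * P)).det = 1 := by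
      simpa only [hcorner, det_transpose_mul_mul M hP, hdet, one_mul, one_pow] using
        mul_det_condensation (Pᵀ * M * P)
    obtain ⟨U, hU⟩ := ih (by omega) (posDef_condensation hN) hcond
    obtain ⟨V, hV⟩ : ∃ V, Pᵀ * M * P = Vᵀ * V :=
      ⟨_, eq_transpose_mul_self_bordered (isSymm_of_posDef hN) hcorner hU⟩
    obtain ⟨Q, hPQ⟩ := hP.exists_right_inv
    refine ⟨V * Q, ?_⟩
    calc M = (P * Q)ᵀ * M * (P * Q) := by simp [hPQ]
      _ = Qᵀ * (Pᵀ * M * P) * Q := by simp only [transpose_mul, Matrix.mul_assoc]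
      _ = (V * Q)ᵀ * (V * Q) := by rw [hV]; simp only [transpose_mul, Matrix.mul_assoc]

end Unimodular

/-- An integer is a sum of three squares if it is `x ^ 2 + y ^ 2 + z ^ 2` for integers `x, y, z`,
zero being allowed. -/
def IsSumThreeSq (n : ℤ) : Prop :=
  ∃ x y z : ℤ, n = x ^ 2 + y ^ 2 + z ^ 2

theorem IsSumThreeSq.mul_sq {n : ℤ} (hn : IsSumThreeSq n) (m : ℤ) : IsSumThreeSq (n * m ^ 2) := by
  obtain ⟨x, y, z, rfl⟩ := hn
  exact ⟨x * m, y * m, z * m, by ring⟩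

theorem isSumThreeSq_of_posDef {M : Matrix (Fin 3) (Fin 3) ℤ} (hM : M.PosDef) (hdet : M.det = 1)
    (v : Fin 3 → ℤ) : IsSumThreeSq (v ⬝ᵥ M *ᵥ v) := by
  obtain ⟨U, rfl⟩ := exists_eq_transpose_mul_self (by norm_num) hM hdet
  refine ⟨(U *ᵥ v) 0, (U *ᵥ v) 1, (U *ᵥ v) 2, ?_⟩
  rw [← mulVec_mulVec, dotProduct_mulVec, vecMul_transpose, vec3_dotProduct]
  ring

theorem isSumThreeSq_of_dvd_sq_add {n d t : ℤ} (hd : 0 < d) (hn : 0 < d * n - 1)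
    (h : d * n - 1 ∣ t ^ 2 + d) : IsSumThreeSq n := by
  obtain ⟨g, hg⟩ := h
  have hgpos : 0 < g := pos_of_mul_pos_right (hg ▸ by positivity) hn.le
  let M : Matrix (Fin 3) (Fin 3) ℤ := !![g, t, 1; t, d * n - 1, 0; 1, 0, n]
  have hdet : M.det = 1 := by
    calc M.det = g * (d * n - 1) * n - t ^ 2 * n - (d * n - 1) := by
          simp only [M, det_fin_three, of_apply, cons_val]
          ring
      _ = 1 := by linear_combination -n * hg
  have hM : M.PosDef := by
    refine posDef_of_leading_minors_pos ?_ fun k hk => ?_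
    · ext i j
      fin_cases i <;> fin_cases j <;> rfl
    · interval_cases k
      · simp
      · simpa [M] using hgpos
      · rw [det_fin_two]
        change 0 < g * (d * n - 1) - t * t
        linarith
      · exact hdet ▸ one_pos
  simpa [M] using isSumThreeSq_of_posDef hM hdet (Pi.single 2 1)

section Representation

open scoped NumberTheorySymbols

theorem jacobiSym_neg_eq {p d : ℕ} (hp : Odd p) (hd : Odd d) (h : p % 4 = 1 ∨ d % 4 = 3) :
    J(-d | p) = J(p | d) := by
  rw [neg_eq_neg_one_mul, jacobiSym.mul_left, jacobiSym.at_neg_one hp]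
  rcases Nat.odd_mod_four_iff.mp (Nat.odd_iff.mp hp) with hp4 | hp4
  · rw [ZMod.χ₄_nat_one_mod_four hp4, one_mul,
      jacobiSym.quadratic_reciprocity_one_mod_four hp4 hd]
  · rw [ZMod.χ₄_nat_three_mod_four hp4,
      jacobiSym.quadratic_reciprocity_three_mod_four (by omega) hp4, neg_one_mul, neg_neg]

theorem exists_dvd_sq_add {p : ℕ} [Fact p.Prime] {d : ℕ} (h : J(-d | p) = 1) :
    ∃ t : ℤ, (p : ℤ) ∣ t ^ 2 + d := by
  obtain ⟨r, hr⟩ := ZMod.isSquare_of_jacobiSym_eq_one h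
  obtain ⟨t, rfl⟩ := ZMod.intCast_surjective r
  refine ⟨t, (ZMod.intCast_zmod_eq_zero_iff_dvd _ _).mp ?_⟩
  push_cast at hr ⊢
  rw [sq, ← hr, neg_add_cancel]

theorem exists_two_mul_dvd_sq_add {p d : ℤ} (hp : Odd p) (hd : Odd d)
    (h : ∃ t, p ∣ t ^ 2 + d) : ∃ t, 2 * p ∣ t ^ 2 + d := by
  obtain ⟨t, ht, hodd⟩ : ∃ t, p ∣ t ^ 2 + d ∧ Odd t := by
    obtain ⟨t, ht⟩ := h
    rcases Int.even_or_odd t with heven | hodd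
    · refine ⟨t + p, ?_, heven.add_odd hp⟩
      rw [show (t + p) ^ 2 + d = t ^ 2 + d + p * (2 * t + p) by ring]
      exact ht.add (dvd_mul_right p _)
    · exact ⟨t, ht, hodd⟩
  have hcop : IsCoprime 2 p := by
    obtain ⟨k, rfl⟩ := hp
    exact ⟨-k, 1, by ring⟩
  exact ⟨t, hcop.mul_dvd (hodd.pow.add_odd hd).two_dvd ht⟩

theorem jacobiSym_eq_one_of_dvd {e p : ℤ} {d : ℕ} (h : (d : ℤ) ∣ e * p + 1)
    (he : J(-e | d) = 1) : J(p | d) = 1 := by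
  have hprod : J(-e | d) * J(p | d) = 1 := by
    have hmod : -e * p % d = 1 % d :=
      Int.modEq_iff_dvd.mpr (by rwa [neg_mul, sub_neg_eq_add, add_comm])
    rw [← jacobiSym.mul_left, jacobiSym.mod_left' hmod, jacobiSym.one_left]
  rwa [he, one_mul] at hprod

theorem isSumThreeSq_of_mul_prime_add_one {n d e p : ℕ} [Fact p.Prime] (hp : Odd p)
    (hd : Odd d) (he : e ∣ 2) (h : e * p + 1 = d * n) (hJ : J(-e | d) = 1)
    (hmod : p % 4 = 1 ∨ d % 4 = 3) : IsSumThreeSq n := by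
  have hh : (e * p : ℤ) + 1 = d * n := mod_cast h
  have hpd : J(p | d) = 1 := jacobiSym_eq_one_of_dvd ⟨n, hh⟩ hJ
  have hsq := exists_dvd_sq_add ((jacobiSym_neg_eq hp hd hmod).trans hpd)
  obtain ⟨t, ht⟩ := exists_two_mul_dvd_sq_add (by exact_mod_cast hp) (by exact_mod_cast hd) hsq
  have hep : (d * n - 1 : ℤ) = e * p := by linarith
  refine isSumThreeSq_of_dvd_sq_add (d := d) (t := t) (mod_cast hd.pos) ?_ ?_
  · rw [hep]
    exact mod_cast Nat.mul_pos (Nat.pos_of_dvd_of_pos he two_pos) hp.pos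
  · rw [hep]
    exact (mul_dvd_mul_right (mod_cast he) _).trans ht

theorem jacobiSym_four_mul_natAbs_mul_add (a : ℤ) {c : ℕ} (hc : Odd c) (j : ℕ) :
    J(a | 4 * a.natAbs * j + c) = J(a | c) := by
  have hodd : Odd (4 * a.natAbs * j + c) := by
    rw [mul_assoc]
    exact ((by decide : Even 4).mul_right _).add_odd hc
  rw [jacobiSym.mod_right a hodd, Nat.mul_add_mod, ← jacobiSym.mod_right a hc]

theorem exists_prime_mul_add_one_eq {n c e r : ℕ} (hn : n ≠ 0) (hr : Odd r)
    (h : e * r + 1 = c * n) :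
    ∃ p, p.Prime ∧ p % 4 = r % 4 ∧ ∃ j, e * p + 1 = (4 * e * j + c) * n := by
  have hcop : r.Coprime (4 * n) := by
    refine .mul_right (.pow_right 2 (Nat.coprime_two_right.mpr hr)) ?_
    refine .coprime_dvd_right (Dvd.intro_left c h.symm) ?_
    simp
  obtain ⟨p, hgt, hp, hmod⟩ := Nat.forall_exists_prime_gt_and_modEq r (by positivity) hcop
  obtain ⟨j, hj⟩ := (Nat.modEq_iff_dvd' hgt.le).mp hmod.symm
  refine ⟨p, hp, hmod.of_mul_right n, j, ?_⟩
  obtain rfl : p = r + 4 * n * j := by omega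
  linarith

theorem isSumThreeSq_of_mul_add_one_eq {n c e r : ℕ} (hn : n ≠ 0) (hc : Odd c) (he : e ∣ 2)
    (hr : Odd r) (h : e * r + 1 = c * n) (hJ : J(-e | c) = 1) (hmod : r % 4 = 1 ∨ c % 4 = 3) :
    IsSumThreeSq n := by
  obtain ⟨p, hp, hp4, j, hj⟩ := exists_prime_mul_add_one_eq hn hr h
  have : Fact p.Prime := ⟨hp⟩
  have hd4 : (4 * e * j + c) % 4 = c % 4 := by
    rw [mul_assoc, Nat.mul_add_mod]
  have hd : Odd (4 * e * j + c) := by grind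
  have hp_odd : Odd p := by grind
  have hJd : J(-e | 4 * e * j + c) = J(-e | c) := by
    simpa using jacobiSym_four_mul_natAbs_mul_add (-e) hc j
  exact isSumThreeSq_of_mul_prime_add_one hp_odd hd he hj (hJd.trans hJ) (by rwa [hp4, hd4])

theorem isSumThreeSq_of_not_four_dvd {n : ℕ} (h4 : ¬4 ∣ n) (h7 : n % 8 ≠ 7) :
    IsSumThreeSq n := by
  have hn : n ≠ 0 := by rintro rfl; exact h4 (dvd_zero 4)
  obtain h | h | h : n % 4 = 2 ∨ n % 8 = 3 ∨ n % 4 = 1 := by omega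
  · exact isSumThreeSq_of_mul_add_one_eq (c := 1) (e := 1) (r := n - 1) hn odd_one (one_dvd 2)
      (Nat.odd_iff.mpr (by omega)) (by omega) (by simp) (.inl (by omega))
  · exact isSumThreeSq_of_mul_add_one_eq (c := 1) (e := 2) (r := (n - 1) / 2) hn odd_one dvd_rfl
      (Nat.odd_iff.mpr (by omega)) (by omega) (by simp) (.inl (by omega))
  · exact isSumThreeSq_of_mul_add_one_eq (c := 3) (e := 2) (r := (3 * n - 1) / 2) hn (by decide)
      dvd_rfl (Nat.odd_iff.mpr (by omega)) (by omega) (by norm_num) (.inr rfl)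

theorem IsSumThreeSq.of_four_mul {n : ℤ} (h : IsSumThreeSq (4 * n)) : IsSumThreeSq n := by
  obtain ⟨x, y, z, hxyz⟩ := h
  have sq_emod_four (a : ℤ) : 2 ∣ a ∧ a ^ 2 % 4 = 0 ∨ a ^ 2 % 4 = 1 := by
    rcases Int.even_or_odd a with ha | ha
    · exact .inl ⟨ha.two_dvd, Int.emod_eq_zero_of_dvd (pow_dvd_pow_of_dvd ha.two_dvd 2)⟩
    · exact .inr (Int.sq_mod_four_eq_one_of_odd ha)
  obtain ⟨⟨x, rfl⟩, ⟨y, rfl⟩, ⟨z, rfl⟩⟩ : 2 ∣ x ∧ 2 ∣ y ∧ 2 ∣ z := by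
    have hx := sq_emod_four x
    have hy := sq_emod_four y
    have hz := sq_emod_four z
    omega
  exact ⟨x, y, z, by linarith⟩

theorem IsSumThreeSq.emod_eight_ne_seven {n : ℤ} (h : IsSumThreeSq n) : n % 8 ≠ 7 := by
  obtain ⟨x, y, z, rfl⟩ := h
  have residue : ∀ x y z : ZMod 8, x ^ 2 + y ^ 2 + z ^ 2 ≠ 7 := by decide
  intro h7
  have := (ZMod.intCast_eq_intCast_iff' (x ^ 2 + y ^ 2 + z ^ 2) 7 8).mpr h7
  exact residue x y z (mod_cast this)

theorem not_isSumThreeSq_mul_sq {s : ℤ} (hs : s % 8 = 7) {m : ℕ} (hm : m ≠ 0) :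
    ¬IsSumThreeSq (s * m ^ 2) := by
  obtain ⟨a, b, hb, rfl⟩ := Nat.exists_eq_two_pow_mul_odd hm
  clear hm
  induction a with
  | zero =>
    refine fun h => h.emod_eight_ne_seven ?_
    have hb8 : (b : ℤ) ^ 2 % 8 = 1 := by
      have := Int.eight_dvd_sq_sub_one_of_odd (k := b) (mod_cast hb)
      omega
    rw [pow_zero, one_mul, Int.mul_emod, hs, hb8]
    rfl
  | succ a ih =>
    refine fun h => ih (IsSumThreeSq.of_four_mul ?_)
    convert h using 1
    push_cast
    ring

end Representation

/-- A positive integer `k` is a sum of three integer squares iff the square-free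
part of `k` is not congruent to `7` modulo `8`. -/
theorem stmt_6 (k : ℕ) (hk : 0 < k) :
    (∃ x y z : ℤ, (k : ℤ) = x ^ 2 + y ^ 2 + z ^ 2) ↔
      (∀ s m : ℕ, Squarefree s → k = s * m ^ 2 → s % 8 ≠ 7) := by
  constructor
  · rintro hsum s m - rfl hs
    have hm : m ≠ 0 := by rintro rfl; simp at hk
    exact not_isSumThreeSq_mul_sq (s := s) (by omega) hm (mod_cast hsum)
  · intro h
    obtain ⟨s, m, rfl, hs⟩ := Nat.sq_mul_squarefree k
    rw [mul_comm] at h ⊢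
    have h4 : ¬4 ∣ s := fun h4 => by simpa using hs 2 h4
    exact mod_cast (isSumThreeSq_of_not_four_dvd h4 (h s m hs rfl)).mul_sq m
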